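/- Lefschetz numbers of a cyclic permutative map on a wedge sum: in the cyclic algebraic model, (a) for every m ≥ 1 one has L(f^{sm}) = (∑_{j=1}^s L(f_jj^{sm})) − (s − 1), and (b) L(f^m) = 1 whenever m is not divisible by s. -/

import Mathlib

theorem trace_pi_aux {s : ℕ} (W : Fin s → Type*) [∀ i, AddCommGroup (W i)]
    [∀ i, Module ℚ (W i)] [∀ i, FiniteDimensional ℚ (W i)]
    (G : (Π i, W i) →ₗ[ℚ] (Π i, W i)) :
    LinearMap.trace ℚ (Π i, W i) G = ∑ i, LinearMap.trace ℚ (W i)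
      ((LinearMap.proj i) ∘ₗ G ∘ₗ (LinearMap.single ℚ W i)) := by
  have h : G = ∑ i, (G ∘ₗ LinearMap.single ℚ W i) ∘ₗ LinearMap.proj i := by
    ext i v : 2
    simp only [LinearMap.comp_apply, LinearMap.sum_apply, LinearMap.proj_apply]
    rw [← map_sum]
    congr 1
    exact (Finset.univ_sum_single (LinearMap.single ℚ W i v)).symm
  conv_lhs => rw [h]
  rw [map_sum]
  refine Finset.sum_congr rfl fun i _ => ?_
  exact LinearMap.trace_comp_comm' _ _

/-- **Lefschetz numbers of a cyclic permutative squared-by-blocks map on a wedge sum.**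
In the cyclic algebraic model: `σ` is a single `s`-cycle on `{1,…,s}` (every point has exact
period `s`), the spaces `V i k` (the `k`-th rational homology of `X_i`) have dimensions
independent of `i`, `A i k : V i k → V (σ i) k` is induced by the coordinate map
`f_{iσ(i)} : X_i → X_{σ(i)}`, and `F k` is the block-permutation endomorphism of
`⊕_i V i k` sending the summand `V i k` into `V (σ i) k` by `A i k` (so `F k = f_{*k}`).
With `L m = L(f^m) = 1 + ∑_{k=1}^N (-1)^k tr(F_k^m)` and
`Lc i m = L(f_ii^m) = 1 + ∑_{k=1}^N (-1)^k tr(π_{i,k} ∘ F_k^m ∘ ι_{i,k})`: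
(a) `L(f^{sm}) = (∑_{j=1}^s L(f_jj^{sm})) − (s − 1)` for every `m ≥ 1`, and
(b) `L(f^m) = 1` whenever `s ∤ m`. -/
theorem stmt4 (s N : ℕ) (hs : 1 ≤ s) (hN : 1 ≤ N)
    (σ : Equiv.Perm (Fin s))
    (hσ : ∀ (i : Fin s) (m : ℕ), (σ ^ m) i = i ↔ s ∣ m)
    (V : Fin s → Fin N → Type*)
    [∀ i k, AddCommGroup (V i k)] [∀ i k, Module ℚ (V i k)]
    [∀ i k, FiniteDimensional ℚ (V i k)]
    (hdim : ∀ (i i' : Fin s) (k : Fin N),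
      Module.finrank ℚ (V i k) = Module.finrank ℚ (V i' k))
    (A : ∀ i k, V i k →ₗ[ℚ] V (σ i) k)
    (F : ∀ k, (Π i, V i k) →ₗ[ℚ] (Π i, V i k))
    (hF : ∀ k (i : Fin s) (v : V i k), F k (Pi.single i v) = Pi.single (σ i) (A i k v))
    (L : ℕ → ℚ)
    (hL : ∀ m, L m =
      1 + ∑ k : Fin N, (-1 : ℚ) ^ ((k : ℕ) + 1) *
        LinearMap.trace ℚ (Π i, V i k) ((F k) ^ m))
    (Lc : Fin s → ℕ → ℚ)
    (hLc : ∀ i m, Lc i m =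
      1 + ∑ k : Fin N, (-1 : ℚ) ^ ((k : ℕ) + 1) *
        LinearMap.trace ℚ (V i k)
          ((LinearMap.proj i) ∘ₗ ((F k) ^ m) ∘ₗ (LinearMap.single ℚ (fun j => V j k) i))) :
    (∀ m, 1 ≤ m → L (s * m) = (∑ j : Fin s, Lc j (s * m)) - ((s : ℚ) - 1)) ∧
    (∀ m, ¬ s ∣ m → L m = 1) := by
  constructor
  · intro m _
    simp only [hL, hLc, Finset.sum_add_distrib, trace_pi_aux, Finset.mul_sum]
    rw [Finset.sum_comm]
    simp
    ring
  · intro m hm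
    rw [hL]
    have hpow : ∀ (k : Fin N) (m : ℕ) (i : Fin s) (v : V i k),
        ∃ w, ((F k) ^ m) (Pi.single i v) = Pi.single ((σ ^ m) i) w := by
      intro k m
      induction m with
      | zero => intro i v; exact ⟨v, rfl⟩
      | succ n ih =>
        intro i v
        obtain ⟨w, hw⟩ := ih i v
        rw [pow_succ' (F k), pow_succ' σ]
        exact ⟨A _ k w, by rw [Module.End.mul_apply, hw, hF]; rfl⟩
    simp only [add_eq_left, trace_pi_aux]
    refine Finset.sum_eq_zero fun k _ => ?_
    rw [Finset.sum_eq_zero, mul_zero]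
    intro i _
    have h0 : (LinearMap.proj i) ∘ₗ ((F k) ^ m) ∘ₗ
        (LinearMap.single ℚ (fun j => V j k) i) = 0 := by
      ext v
      obtain ⟨w, hw⟩ := hpow k m i v
      have hne : i ≠ (σ ^ m) i := fun h => hm ((hσ i m).1 h.symm)
      simp only [LinearMap.comp_apply, LinearMap.proj_apply, LinearMap.coe_single,
        LinearMap.zero_apply]
      rw [hw, Pi.single_eq_of_ne hne]
    rw [h0, map_zero]
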